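/- In the Gaussian sequence model X | θ ~ N(θ, σ_n² Iₙ), X̃ | θ ~ N(θ, σ_m² Iₙ) independent, let Θ = { θ : Σ_{i=1}^n a_i² θ_i² ≤ C } with 0 < a_1 ≤ a_2 ≤ ⋯ and let π be any prior probability distribution supported on Θ. Then the Bayes predictive density p̂_π(x̃ | x) = ∫ p(x̃ | θ') π(θ' | x) dθ' satisfies, for every θ ∈ ℝⁿ, R(θ, p̂_π) ≤ (1/(m σ_m²)) ( ‖θ‖² + C/a_1² ). -/

import Mathlib

open MeasureTheory Real Filter ProbabilityTheory

/-- Product Gaussian density on `ℝᵏ` with mean vector `μ` and common variance `v`. -/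
noncomputable def gaussD {k : ℕ} (μ : Fin k → ℝ) (v : ℝ) (x : Fin k → ℝ) : ℝ :=
  ∏ i, ((Real.sqrt (2 * Real.pi * v))⁻¹ * Real.exp (-((x i - μ i) ^ 2) / (2 * v)))

/-- Product Gaussian density with mean vector `μ` and coordinatewise variances `v`. -/
noncomputable def gaussDiagMean {k : ℕ} (μ v : Fin k → ℝ) (x : Fin k → ℝ) : ℝ :=
  ∏ i, ((Real.sqrt (2 * Real.pi * v i))⁻¹ * Real.exp (-((x i - μ i) ^ 2) / (2 * v i)))

/-- Average KL risk `(1/m) E log(p(X̃|θ)/p̂(X̃|X))` in the Gaussian sequence model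
`X|θ ~ N(θ, vn Iₙ)`, `X̃|θ ~ N(θ, vm Iₙ)` independent. -/
noncomputable def klRisk (n m : ℕ) (vn vm : ℝ) (θ : Fin n → ℝ)
    (phat : (Fin n → ℝ) → (Fin n → ℝ) → ℝ) : ℝ :=
  (m : ℝ)⁻¹ * ∫ x : Fin n → ℝ, ∫ xt : Fin n → ℝ,
    gaussD θ vn x * gaussD θ vm xt * Real.log (gaussD θ vm xt / phat x xt)

/-- Bayes predictive density under the diagonal Gaussian prior `N(0, diag s)`. -/
noncomputable def bayesPredS (n : ℕ) (vn vm : ℝ) (s : Fin n → ℝ)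
    (x xt : Fin n → ℝ) : ℝ :=
  (∫ θ : Fin n → ℝ, gaussD θ vn x * gaussD θ vm xt * gaussDiagMean 0 s θ) /
  (∫ θ : Fin n → ℝ, gaussD θ vn x * gaussDiagMean 0 s θ)

/-- The ellipsoid `Θ(C) = {θ : Σ aᵢ² θᵢ² ≤ C}`. -/
def ellipsoid (n : ℕ) (a : Fin n → ℝ) (C : ℝ) : Set (Fin n → ℝ) :=
  {θ | ∑ i, (a i) ^ 2 * (θ i) ^ 2 ≤ C}

/-- `phat` is a predictive density: for each observation it is a probability density. -/
def IsPredDensity (n : ℕ) (phat : (Fin n → ℝ) → (Fin n → ℝ) → ℝ) : Prop :=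
  ∀ x, (∀ y, 0 ≤ phat x y) ∧ (∫ y : Fin n → ℝ, phat x y) = 1

/-- Minimax average KL prediction risk over all predictive densities. -/
noncomputable def minimaxRisk (n m : ℕ) (vn vm : ℝ) (Θ : Set (Fin n → ℝ)) : ℝ :=
  sInf { r | ∃ phat, IsPredDensity n phat ∧
    r = sSup { t | ∃ θ ∈ Θ, t = klRisk n m vn vm θ phat } }

/-- Linear minimax risk: minimax over Bayes predictive densities under diagonal
Gaussian priors. -/
noncomputable def linMinimaxRisk (n m : ℕ) (vn vm : ℝ) (Θ : Set (Fin n → ℝ)) : ℝ :=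
  sInf { r | ∃ s : Fin n → ℝ, (∀ i, 0 ≤ s i) ∧
    r = sSup { t | ∃ θ ∈ Θ, t = klRisk n m vn vm θ (bayesPredS n vn vm s) } }

/-- Bayes predictive density under a prior probability measure `π` on `θ`. -/
noncomputable def bayesPredMeasure (n : ℕ) (vn vm : ℝ) (pr : Measure (Fin n → ℝ))
    (x xt : Fin n → ℝ) : ℝ :=
  (∫ θ, gaussD θ vn x * gaussD θ vm xt ∂pr) / (∫ θ, gaussD θ vn x ∂pr)

open scoped NNReal ENNReal

/- By concavity of the logarithm, the log-loss of the predictive density is at most the posterior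
average of `log (p(x̃ | θ) / p(x̃ | θ'))`. Taking the expectation over `x̃` and exchanging integrals
bounds the Kullback–Leibler divergence by the posterior average of
`KL(N(θ, v I) ‖ N(θ', v I)) = ‖θ - θ'‖² / (2 v)`, which is at most `(‖θ‖² + ‖θ'‖²) / v`. -/

section General

variable {α : Type*} {mα : MeasurableSpace α} {μ : Measure α}

lemma integral_le_integral_of_integral_nonneg {f g : α → ℝ} (hg : Integrable g μ)
    (hg0 : 0 ≤ ∫ x, g x ∂μ) (hfg : f ≤ᵐ[μ] g) : ∫ x, f x ∂μ ≤ ∫ x, g x ∂μ := by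
  by_cases hf : Integrable f μ
  · exact integral_mono_ae hf hg hfg
  · -- the integral of a non-integrable function is `0`
    rwa [integral_undef hf]

lemma log_div_integral_le_integral_log_div [IsProbabilityMeasure μ] {p : ℝ} {q : α → ℝ}
    (hp : 0 < p) (hq : ∀ t, 0 < q t) (hqi : Integrable q μ)
    (hlog : Integrable (fun t ↦ log (p / q t)) μ) :
    log (p / ∫ t, q t ∂μ) ≤ ∫ t, log (p / q t) ∂μ := by
  have hexp (t : α) : exp (-log (p / q t)) = q t / p := by
    rw [← log_inv, inv_div, exp_log (div_pos (hq t) hp)]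
  have hjensen : exp (-∫ t, log (p / q t) ∂μ) ≤ (∫ t, q t ∂μ) / p := by
    have h := convexOn_exp.map_integral_le continuous_exp.continuousOn isClosed_univ
      (ae_of_all μ fun _ ↦ Set.mem_univ _) hlog.neg
      (by simpa [Function.comp_def, hexp] using hqi.div_const p)
    simpa [hexp, integral_neg, integral_div] using h
  have hpos : 0 < (∫ t, q t ∂μ) / p := (exp_pos _).trans_le hjensen
  rw [← inv_div, log_inv]
  exact neg_le_of_neg_le ((le_log_iff_exp_le hpos).2 hjensen)

lemma pi_withDensity_ofReal {ι : Type*} [Fintype ι] {E : ι → Type*}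
    {mE : ∀ i, MeasurableSpace (E i)} {μ : ∀ i, Measure (E i)} [∀ i, SigmaFinite (μ i)]
    {f : ∀ i, E i → ℝ}
    (hf : ∀ i, Integrable (f i) (μ i)) (hf0 : ∀ i x, 0 ≤ f i x) :
    Measure.pi (fun i ↦ (μ i).withDensity fun x ↦ ENNReal.ofReal (f i x)) =
      (Measure.pi μ).withDensity fun x ↦ ENNReal.ofReal (∏ i, f i (x i)) := by
  have (i : ι) : IsFiniteMeasure ((μ i).withDensity fun x ↦ ENNReal.ofReal (f i x)) :=
    isFiniteMeasure_withDensity_ofReal (hf i).2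
  refine Measure.pi_eq fun s hs ↦ ?_
  have hprod0 (x : ∀ i, E i) : 0 ≤ ∏ i, f i (x i) := Finset.prod_nonneg fun i _ ↦ hf0 i (x i)
  rw [withDensity_apply _ (.univ_pi hs), Measure.restrict_pi_pi,
    ← ofReal_integral_eq_lintegral_ofReal
      (Integrable.fintype_prod_dep fun i ↦ (hf i).restrict) (ae_of_all _ hprod0),
    integral_fintype_prod_eq_prod,
    ENNReal.ofReal_prod_of_nonneg fun i _ ↦ integral_nonneg (hf0 i)]
  refine Finset.prod_congr rfl fun i _ ↦ ?_
  rw [withDensity_apply _ (hs i),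
    ofReal_integral_eq_lintegral_ofReal (hf i).restrict (ae_of_all _ (hf0 i))]

lemma memLp_eval_of_ae_sum_sq_le {ι : Type*} [Fintype ι] {ν : Measure (ι → ℝ)} [IsFiniteMeasure ν]
    {B : ℝ} (hB : ∀ᵐ t ∂ν, ∑ i, t i ^ 2 ≤ B) (i : ι) (p : ℝ≥0∞) : MemLp (fun t ↦ t i) p ν := by
  refine MemLp.of_bound (measurable_pi_apply i).aestronglyMeasurable √B ?_
  filter_upwards [hB] with t ht
  exact abs_le_sqrt ((Finset.single_le_sum (f := fun i ↦ t i ^ 2) (fun i _ ↦ sq_nonneg _)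
    (Finset.mem_univ i)).trans ht)

end General

section GaussianDensity

variable {k : ℕ} {v : ℝ}

lemma gaussD_pos (hv : 0 < v) (μ x : Fin k → ℝ) : 0 < gaussD μ v x := by
  unfold gaussD
  positivity

lemma gaussD_le (hv : 0 ≤ v) (μ x : Fin k → ℝ) :
    gaussD μ v x ≤ ∏ _i : Fin k, (√(2 * π * v))⁻¹ := by
  refine Finset.prod_le_prod (fun i _ ↦ by positivity) fun i _ ↦ ?_
  refine mul_le_of_le_one_right (by positivity) (exp_le_one_iff.2 ?_)
  exact div_nonpos_of_nonpos_of_nonneg (neg_nonpos.2 (sq_nonneg _)) (by positivity)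

lemma continuous_gaussD_mean (v : ℝ) (x : Fin k → ℝ) : Continuous fun μ ↦ gaussD μ v x := by
  unfold gaussD
  fun_prop

lemma integrable_gaussD_mean (hv : 0 < v) (x : Fin k → ℝ) (ν : Measure (Fin k → ℝ))
    [IsFiniteMeasure ν] : Integrable (fun μ ↦ gaussD μ v x) ν := by
  refine .of_bound (continuous_gaussD_mean v x).aestronglyMeasurable
    (∏ _i : Fin k, (√(2 * π * v))⁻¹) (ae_of_all _ fun μ ↦ ?_)
  rw [norm_of_nonneg (gaussD_pos hv μ x).le]
  exact gaussD_le hv.le μ x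

lemma log_gaussD_div_gaussD (hv : 0 < v) (θ t x : Fin k → ℝ) :
    log (gaussD θ v x / gaussD t v x) =
      (∑ i, ((x i - t i) ^ 2 - (x i - θ i) ^ 2)) / (2 * v) := by
  have hc : (√(2 * π * v))⁻¹ ≠ 0 := by positivity
  unfold gaussD
  rw [← Finset.prod_div_distrib, log_prod fun i _ ↦ by positivity, Finset.sum_div]
  refine Finset.sum_congr rfl fun i _ ↦ ?_
  rw [mul_div_mul_left _ _ hc, ← exp_sub, log_exp]
  ring

end GaussianDensity

section GaussianMeasure

variable {k : ℕ} {v : ℝ≥0}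

/-- The Gaussian measure `N(μ, v I)` on `ℝᵏ`, of which `gaussD μ v` is the density when `v ≠ 0`. -/
noncomputable abbrev gaussianPi (μ : Fin k → ℝ) (v : ℝ≥0) : Measure (Fin k → ℝ) :=
  Measure.pi fun i ↦ gaussianReal (μ i) v

lemma gaussianPi_eq_withDensity_gaussD (hv : v ≠ 0) (μ : Fin k → ℝ) :
    gaussianPi μ v = volume.withDensity fun x ↦ ENNReal.ofReal (gaussD μ v x) := by
  simp only [gaussianPi, gaussianReal_of_var_ne_zero _ hv]
  exact pi_withDensity_ofReal (fun i ↦ integrable_gaussianPDFReal (μ i) v)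
    fun i ↦ gaussianPDFReal_nonneg (μ i) v

lemma integral_gaussD_mul (hv : 0 < v) (μ : Fin k → ℝ) (f : (Fin k → ℝ) → ℝ) :
    ∫ x, gaussD μ v x * f x = ∫ x, f x ∂gaussianPi μ v := by
  have hmeas : Measurable fun x ↦ ENNReal.ofReal (gaussD μ v x) := by
    unfold gaussD
    fun_prop
  rw [gaussianPi_eq_withDensity_gaussD hv.ne',
    integral_withDensity_eq_integral_toReal_smul hmeas (by simp)]
  refine integral_congr_ae (ae_of_all _ fun x ↦ ?_)
  simp only [ENNReal.toReal_ofReal (gaussD_pos (NNReal.coe_pos.2 hv) μ x).le, smul_eq_mul]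

lemma klRisk_eq_integral_gaussianPi {n : ℕ} (m : ℕ) {vn vm : ℝ≥0} (hvn : 0 < vn) (hvm : 0 < vm)
    (θ : Fin n → ℝ) (phat : (Fin n → ℝ) → (Fin n → ℝ) → ℝ) :
    klRisk n m vn vm θ phat = (m : ℝ)⁻¹ *
      ∫ x, ∫ y, log (gaussD θ vm y / phat x y) ∂gaussianPi θ vm ∂gaussianPi θ vn := by
  simp only [klRisk, mul_assoc, integral_const_mul, integral_gaussD_mul hvn,
    integral_gaussD_mul hvm]

lemma memLp_eval_gaussianPi (μ : Fin k → ℝ) (v : ℝ≥0) (i : Fin k) :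
    MemLp (fun x ↦ x i) 2 (gaussianPi μ v) :=
  (memLp_id_gaussianReal 2).comp_measurePreserving (measurePreserving_eval _ i)

lemma integral_log_gaussD_div_gaussD (hv : 0 < v) (θ t : Fin k → ℝ) :
    ∫ x, log (gaussD θ v x / gaussD t v x) ∂gaussianPi θ v =
      (∑ i, (θ i - t i) ^ 2) / (2 * v) := by
  have hlin (i : Fin k) (x : Fin k → ℝ) : (x i - t i) ^ 2 - (x i - θ i) ^ 2 =
      2 * (θ i - t i) * x i + (t i ^ 2 - θ i ^ 2) := by ring
  have hint (i : Fin k) : Integrable (fun x ↦ 2 * (θ i - t i) * x i) (gaussianPi θ v) :=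
    ((memLp_eval_gaussianPi θ v i).integrable one_le_two).const_mul _
  have hcoord (i : Fin k) :
      ∫ x, ((x i - t i) ^ 2 - (x i - θ i) ^ 2) ∂gaussianPi θ v = (θ i - t i) ^ 2 := by
    simp only [hlin]
    rw [integral_add (hint i) (integrable_const _), integral_const_mul, integral_eval,
      integral_id_gaussianReal, integral_const, probReal_univ, one_smul]
    ring
  simp only [log_gaussD_div_gaussD (NNReal.coe_pos.2 hv)]
  rw [integral_div, integral_finsetSum _ fun i _ ↦ ?_]
  · simp only [hcoord]
  · simp only [hlin]
    exact (hint i).add (integrable_const _)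

variable {ν : Measure (Fin k → ℝ)} [IsProbabilityMeasure ν]

lemma integrable_log_gaussD_div_gaussD_prod (hv : 0 < v) (hν : ∀ i, MemLp (fun t ↦ t i) 2 ν)
    (θ : Fin k → ℝ) :
    Integrable (fun z : (Fin k → ℝ) × (Fin k → ℝ) ↦ log (gaussD θ v z.1 / gaussD z.2 v z.1))
      ((gaussianPi θ v).prod ν) := by
  have hfst (i : Fin k) : MemLp (fun z : (Fin k → ℝ) × (Fin k → ℝ) ↦ z.1 i) 2
      ((gaussianPi θ v).prod ν) :=
    (memLp_eval_gaussianPi θ v i).comp_measurePreserving measurePreserving_fst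
  have hsnd (i : Fin k) : MemLp (fun z : (Fin k → ℝ) × (Fin k → ℝ) ↦ z.2 i) 2
      ((gaussianPi θ v).prod ν) :=
    (hν i).comp_measurePreserving measurePreserving_snd
  simp only [log_gaussD_div_gaussD (NNReal.coe_pos.2 hv)]
  exact (integrable_finsetSum _ fun i _ ↦ ((hfst i).sub (hsnd i)).integrable_sq.sub
    ((hfst i).sub (memLp_const (θ i))).integrable_sq).div_const _

lemma log_gaussD_div_integral_gaussD_le (hv : 0 < v) (hν : ∀ i, MemLp (fun t ↦ t i) 2 ν)
    (θ y : Fin k → ℝ) :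
    log (gaussD θ v y / ∫ t, gaussD t v y ∂ν) ≤ ∫ t, log (gaussD θ v y / gaussD t v y) ∂ν := by
  have hv' : 0 < (v : ℝ) := NNReal.coe_pos.2 hv
  refine log_div_integral_le_integral_log_div (gaussD_pos hv' θ y) (fun t ↦ gaussD_pos hv' t y)
    (integrable_gaussD_mean hv' y ν) ?_
  simp only [log_gaussD_div_gaussD hv']
  exact (integrable_finsetSum _ fun i _ ↦ ((memLp_const (y i)).sub (hν i)).integrable_sq.sub
    (integrable_const _)).div_const _

lemma integral_log_gaussD_div_integral_gaussD_le (hv : 0 < v)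
    (hν : ∀ i, MemLp (fun t ↦ t i) 2 ν) (θ : Fin k → ℝ) :
    ∫ y, log (gaussD θ v y / ∫ t, gaussD t v y ∂ν) ∂gaussianPi θ v ≤
      ∫ t, (∑ i, (θ i - t i) ^ 2) / (2 * v) ∂ν := by
  have hint := integrable_log_gaussD_div_gaussD_prod hv hν θ
  have hswap : ∫ y, ∫ t, log (gaussD θ v y / gaussD t v y) ∂ν ∂gaussianPi θ v =
      ∫ t, (∑ i, (θ i - t i) ^ 2) / (2 * v) ∂ν := by
    rw [integral_integral_swap hint]
    simp only [integral_log_gaussD_div_gaussD hv]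
  rw [← hswap]
  refine integral_le_integral_of_integral_nonneg hint.integral_prod_left ?_
    (ae_of_all _ (log_gaussD_div_integral_gaussD_le hv hν θ))
  rw [hswap]
  exact integral_nonneg fun t ↦ by positivity

lemma integral_log_gaussD_div_integral_gaussD_le_of_ae_sum_sq_le (hv : 0 < v) {B : ℝ}
    (hB : ∀ᵐ t ∂ν, ∑ i, t i ^ 2 ≤ B) (θ : Fin k → ℝ) :
    ∫ y, log (gaussD θ v y / ∫ t, gaussD t v y ∂ν) ∂gaussianPi θ v ≤ (∑ i, θ i ^ 2 + B) / v := by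
  refine (integral_log_gaussD_div_integral_gaussD_le hv
    (fun i ↦ memLp_eval_of_ae_sum_sq_le hB i 2) θ).trans ?_
  have hbound : ∀ᵐ t ∂ν, (∑ i, (θ i - t i) ^ 2) / (2 * v) ≤ (∑ i, θ i ^ 2 + B) / v := by
    filter_upwards [hB] with t ht
    have hsum : ∑ i, (θ i - t i) ^ 2 ≤ 2 * (∑ i, θ i ^ 2 + ∑ i, t i ^ 2) := by
      rw [← Finset.sum_add_distrib, Finset.mul_sum]
      exact Finset.sum_le_sum fun i _ ↦ by linarith [sq_nonneg (θ i + t i)]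
    rw [← mul_div_mul_left (∑ i, θ i ^ 2 + B) (v : ℝ) two_ne_zero]
    gcongr
    linarith
  simpa using integral_mono_of_nonneg (ae_of_all _ fun t ↦ by positivity) (integrable_const _)
    hbound

end GaussianMeasure

section Posterior

variable {n : ℕ} {vn vm : ℝ}

/-- The posterior distribution of the mean given the observation `x` from `N(θ, vn I)`, under the
prior `pr`: exponential tilting by the log-likelihood reweights `pr` by the likelihood and
normalizes. -/
noncomputable def gaussianPosterior (vn : ℝ) (pr : Measure (Fin n → ℝ)) (x : Fin n → ℝ) :
    Measure (Fin n → ℝ) :=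
  pr.tilted fun t ↦ log (gaussD t vn x)

lemma gaussianPosterior_absolutelyContinuous (vn : ℝ) (pr : Measure (Fin n → ℝ)) (x : Fin n → ℝ) :
    gaussianPosterior vn pr x ≪ pr :=
  tilted_absolutelyContinuous _ _

lemma isProbabilityMeasure_gaussianPosterior (hvn : 0 < vn) (pr : Measure (Fin n → ℝ))
    [IsFiniteMeasure pr] [NeZero pr] (x : Fin n → ℝ) :
    IsProbabilityMeasure (gaussianPosterior vn pr x) := by
  refine isProbabilityMeasure_tilted ?_
  simpa only [exp_log (gaussD_pos hvn _ x)] using integrable_gaussD_mean hvn x pr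

lemma bayesPredMeasure_eq_integral_gaussianPosterior (hvn : 0 < vn) (hvm : 0 < vm)
    (pr : Measure (Fin n → ℝ)) (x y : Fin n → ℝ) :
    bayesPredMeasure n vn vm pr x y = ∫ t, gaussD t vm y ∂gaussianPosterior vn pr x := by
  have h := integral_exp_tilted (μ := pr) (fun t ↦ log (gaussD t vn x))
    (fun t ↦ log (gaussD t vm y))
  simp only [Pi.add_apply, exp_add, exp_log (gaussD_pos hvn _ x),
    exp_log (gaussD_pos hvm _ y)] at h
  exact h.symm

end Posterior

lemma sum_sq_le_of_mem_ellipsoid {n : ℕ} {a : Fin n → ℝ} {C α : ℝ} (hα : 0 < α)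
    (ha : ∀ i, α ≤ a i) {t : Fin n → ℝ} (ht : t ∈ ellipsoid n a C) :
    ∑ i, t i ^ 2 ≤ C / α ^ 2 := by
  rw [le_div_iff₀' (by positivity), Finset.mul_sum]
  refine le_trans (Finset.sum_le_sum fun i _ ↦ ?_) ht
  have := ha i
  gcongr

theorem stmt13_general (n m : ℕ) (_hm : 0 < m) {vn vm : ℝ} (hvn : 0 < vn) (hvm : 0 < vm) {B : ℝ}
    (pr : Measure (Fin n → ℝ)) [IsFiniteMeasure pr] [NeZero pr]
    (hB : ∀ᵐ t ∂pr, ∑ i, t i ^ 2 ≤ B) (θ : Fin n → ℝ) :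
    klRisk n m vn vm θ (bayesPredMeasure n vn vm pr) ≤
      (1 / (m * vm)) * (∑ i, θ i ^ 2 + B) := by
  lift vn to ℝ≥0 using hvn.le
  lift vm to ℝ≥0 using hvm.le
  have hbound (x : Fin n → ℝ) :
      ∫ y, log (gaussD θ vm y / bayesPredMeasure n vn vm pr x y) ∂gaussianPi θ vm ≤
        (∑ i, θ i ^ 2 + B) / vm := by
    have := isProbabilityMeasure_gaussianPosterior hvn pr x
    simp only [bayesPredMeasure_eq_integral_gaussianPosterior hvn hvm]
    exact integral_log_gaussD_div_integral_gaussD_le_of_ae_sum_sq_le (NNReal.coe_pos.1 hvm)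
      ((gaussianPosterior_absolutelyContinuous vn pr x).ae_le hB) θ
  have hB0 : 0 ≤ B := by
    obtain ⟨t, ht⟩ := hB.exists
    exact (Finset.sum_nonneg fun i _ ↦ sq_nonneg (t i)).trans ht
  calc klRisk n m vn vm θ (bayesPredMeasure n vn vm pr)
      ≤ (m : ℝ)⁻¹ * ∫ _x, (∑ i, θ i ^ 2 + B) / vm ∂gaussianPi θ vn := by
        rw [klRisk_eq_integral_gaussianPi m (NNReal.coe_pos.1 hvn) (NNReal.coe_pos.1 hvm)]
        refine mul_le_mul_of_nonneg_left ?_ (by positivity)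
        exact integral_le_integral_of_integral_nonneg (integrable_const _)
          (integral_nonneg fun _ ↦ by positivity) (ae_of_all _ hbound)
    _ = (1 / (m * vm)) * (∑ i, θ i ^ 2 + B) := by
        rw [integral_const, probReal_univ, one_smul]
        ring

/-- for any prior supported on the ellipsoid `Θ`, the Bayes predictive density
has KL risk bounded by `(1/(m σ_m²)) (‖θ‖² + C/a₁²)` at every `θ`. -/
theorem stmt13 (n m : ℕ) (hn : 0 < n) (hm : 0 < m)
    (a : Fin n → ℝ) (ha : ∀ i, 0 < a i) (hmono : Monotone a) (C : ℝ) (hC : 0 < C)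
    (pr : Measure (Fin n → ℝ)) [IsProbabilityMeasure pr]
    (hsupp : pr (ellipsoid n a C)ᶜ = 0) :
    ∀ θ : Fin n → ℝ,
      klRisk n m ((n : ℝ)⁻¹) ((m : ℝ)⁻¹) θ
          (bayesPredMeasure n ((n : ℝ)⁻¹) ((m : ℝ)⁻¹) pr) ≤
        (1 / ((m : ℝ) * (m : ℝ)⁻¹)) * (∑ i, (θ i) ^ 2 + C / (a ⟨0, hn⟩) ^ 2) := by
  intro θ
  exact stmt13_general n m hm (by positivity) (by positivity) pr
    (.mono hsupp fun _ ↦ sum_sq_le_of_mem_ellipsoid (ha _) fun i ↦ hmono (Nat.zero_le i)) θ
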